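/- arXiv:1111.0030 — 5 statements merged into one kernel-verified Lean document; each statement's English description precedes it below -/
import Mathlib

section
/- Let R be a commutative ring, M an R-module, X : M → M an R-linear map, G ∈ M and μ ∈ R such that X(X(G)) = μ • G. Then for all a, b ∈ R and every natural number m ≥ 1, ((a • id + b • X)^m)(G) = P_m • G + D_m • X(G), where P_m = Σ_{k=0}^{⌊m/2⌋} C(m,2k) · a^{m-2k} · b^{2k} · μ^k and D_m = Σ_{k=0}^{⌊(m-1)/2⌋} C(m,2k+1) · a^{m-2k-1} · b^{2k+1} · μ^k, with C(m,j) the binomial coefficients. -/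
/-!
Since `a • id` and `b • X` commute, the binomial theorem writes `(a • id + b • X) ^ m` as a
combination of the powers of `X`. Because `X ^ 2` acts on `G` as the scalar `μ`, the even powers
send `G` to multiples of `G` and the odd ones to multiples of `X G`.
-/

theorem sum_range_eq_sum_even_add_sum_odd {A : Type*} [AddCommMonoid A] (f : ℕ → A) (n : ℕ) :
    ∑ j ∈ Finset.range n, f j =
      ∑ k ∈ Finset.range ((n + 1) / 2), f (2 * k) +
        ∑ k ∈ Finset.range (n / 2), f (2 * k + 1) := by
  induction n with
  | zero => simp
  | succ n ih =>
    rw [Finset.sum_range_succ, ih]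
    obtain ⟨k, rfl | rfl⟩ := n.even_or_odd'
    · rw [show (2 * k + 1 + 1) / 2 = k + 1 by lia, show (2 * k + 1) / 2 = k by lia,
        show 2 * k / 2 = k by lia, Finset.sum_range_succ, add_right_comm]
    · rw [show (2 * k + 1 + 1 + 1) / 2 = k + 1 by lia, show (2 * k + 1 + 1) / 2 = k + 1 by lia,
        show (2 * k + 1) / 2 = k by lia, Finset.sum_range_succ _ k, Finset.sum_range_succ _ k,
        add_assoc]

theorem pow_apply_eq_pow_smul {R M : Type*} [Semiring R] [AddCommMonoid M] [Module R M]
    {f : Module.End R M} {μ : R} {v : M} (h : f v = μ • v) (k : ℕ) :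
    (f ^ k) v = μ ^ k • v := by
  induction k with
  | zero => simp
  | succ k ih => rw [pow_succ, Module.End.mul_apply, h, map_smul, ih, smul_smul, pow_succ']

section SquareEigenvector

variable {R M : Type*} [Semiring R] [AddCommMonoid M] [Module R M]
  {X : Module.End R M} {G : M} {μ : R}

theorem pow_two_mul_apply_eq_pow_smul (h : X (X G) = μ • G) (k : ℕ) :
    (X ^ (2 * k)) G = μ ^ k • G := by
  have h_sq : (X ^ 2) G = μ • G := by rw [pow_two, Module.End.mul_apply, h]
  rw [pow_mul, pow_apply_eq_pow_smul h_sq]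

theorem pow_two_mul_add_one_apply_eq_pow_smul (h : X (X G) = μ • G) (k : ℕ) :
    (X ^ (2 * k + 1)) G = μ ^ k • X G := by
  rw [pow_succ', Module.End.mul_apply, pow_two_mul_apply_eq_pow_smul h, map_smul]

end SquareEigenvector

section Binomial

variable {R M : Type*} [CommSemiring R] [AddCommMonoid M] [Module R M]

theorem smul_id_add_smul_pow_apply (X : M →ₗ[R] M) (a b : R) (m : ℕ) (v : M) :
    ((a • (LinearMap.id : M →ₗ[R] M) + b • X) ^ m) v =
      ∑ j ∈ Finset.range (m + 1), ((m.choose j : R) * a ^ (m - j) * b ^ j) • (X ^ j) v := by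
  have h_comm : Commute (b • X) (a • LinearMap.id) :=
    ((Commute.one_right (X : Module.End R M)).smul_left b).smul_right a
  rw [add_comm, h_comm.add_pow, LinearMap.sum_apply]
  refine Finset.sum_congr rfl fun j _ ↦ ?_
  simp only [smul_pow, Module.End.id_pow, Module.End.mul_apply, Module.End.natCast_apply,
    LinearMap.smul_apply, LinearMap.id_apply, map_smul, smul_smul,
    ← Nat.cast_smul_eq_nsmul R]
  ring_nf

theorem stmt_1_general (X : M →ₗ[R] M) (G : M) (μ a b : R) (h : X (X G) = μ • G) (m : ℕ) :
    ((a • (LinearMap.id : M →ₗ[R] M) + b • X) ^ m) G =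
      (∑ k ∈ Finset.range (m / 2 + 1),
          (m.choose (2 * k) : R) * a ^ (m - 2 * k) * b ^ (2 * k) * μ ^ k) • G +
      (∑ k ∈ Finset.range ((m + 1) / 2),
          (m.choose (2 * k + 1) : R) * a ^ (m - 2 * k - 1) * b ^ (2 * k + 1) * μ ^ k) • X G := by
  rw [smul_id_add_smul_pow_apply, sum_range_eq_sum_even_add_sum_odd,
    show (m + 1 + 1) / 2 = m / 2 + 1 by lia]
  simp only [pow_two_mul_apply_eq_pow_smul h, pow_two_mul_add_one_apply_eq_pow_smul h,
    smul_smul, Finset.sum_smul, Nat.sub_sub]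

end Binomial

/-- Theorem 2 of the paper (explicit expression of `U^m(G) = P_m G + D_m X(G)`). -/
theorem stmt_1 {R : Type*} [CommRing R] {M : Type*} [AddCommGroup M] [Module R M]
    (X : M →ₗ[R] M) (G : M) (μ a b : R) (h : X (X G) = μ • G)
    (m : ℕ) (hm : 1 ≤ m) :
    ((a • (LinearMap.id : M →ₗ[R] M) + b • X) ^ m) G =
      (∑ k ∈ Finset.range (m / 2 + 1),
          (m.choose (2 * k) : R) * a ^ (m - 2 * k) * b ^ (2 * k) * μ ^ k) • G +
      (∑ k ∈ Finset.range ((m - 1) / 2 + 1),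
          (m.choose (2 * k + 1) : R) * a ^ (m - 2 * k - 1) * b ^ (2 * k + 1) * μ ^ k) • X G := by
  rw [show (m - 1) / 2 + 1 = (m + 1) / 2 by lia]
  exact stmt_1_general X G μ a b h m
end

section
/- Let κ > 0, c ≠ 0, let I ⊆ ℝ be an open interval, and let γ : ℝ → ℝ be differentiable on I with γ'(u) = -c·(γ(u)² + κ) for all u ∈ I. Then there exists u₀ ∈ ℝ such that for all u ∈ I one has sin(√κ(cu+u₀)) ≠ 0 and γ(u)·sin(√κ(cu+u₀)) = √κ·cos(√κ(cu+u₀)). -/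
/-!
Dividing `γ' = -θ' (γ² + κ)` by `γ² + κ` separates the variables: with `s = √κ`, the function
`arctan (γ / s) + s θ` has zero derivative, hence equals a constant `C` on the interval.
The complementary angle `π / 2 - arctan (γ / s)` is then `s θ + (π / 2 - C)`, and its cotangent is
`γ / s`; its sine is `cos (arctan (γ / s)) > 0`, so the solution never meets a pole.
-/

open Real

theorem mul_cos_arctan_div {s : ℝ} (hs : s ≠ 0) (y : ℝ) :
    y * cos (arctan (y / s)) = s * sin (arctan (y / s)) := by
  rw [← tan_mul_cos (cos_arctan_pos _).ne', tan_arctan, ← mul_assoc, mul_div_cancel₀ y hs]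

theorem hasDerivWithinAt_arctan_div {f : ℝ → ℝ} {f' s u : ℝ} {I : Set ℝ} (hs : s ≠ 0)
    (hf : HasDerivWithinAt f f' I u) :
    HasDerivWithinAt (fun v => arctan (f v / s)) (s * f' / (f u ^ 2 + s ^ 2)) I u := by
  refine (hf.div_const s).arctan.congr_deriv ?_
  have : f u ^ 2 + s ^ 2 ≠ 0 := by positivity
  have : 1 + (f u / s) ^ 2 = (f u ^ 2 + s ^ 2) / s ^ 2 := by field_simp; ring
  rw [this]
  field_simp

theorem hasDerivWithinAt_arctan_div_add_of_riccati {γ θ : ℝ → ℝ} {θ' s u : ℝ} {I : Set ℝ}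
    (hs : s ≠ 0) (hθ : HasDerivWithinAt θ θ' I u)
    (hγ : HasDerivWithinAt γ (-θ' * (γ u ^ 2 + s ^ 2)) I u) :
    HasDerivWithinAt (fun v => arctan (γ v / s) + s * θ v) 0 I u := by
  refine ((hasDerivWithinAt_arctan_div hs hγ).add (hθ.const_mul s)).congr_deriv ?_
  have : γ u ^ 2 + s ^ 2 ≠ 0 := by positivity
  field_simp
  ring

theorem eq_of_hasDerivWithinAt_zero {𝕜 E : Type*} [RCLike 𝕜] [NormedAddCommGroup E]
    [NormedSpace 𝕜 E] {f : 𝕜 → E} {S : Set 𝕜} (hS : Convex ℝ S)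
    (hf : ∀ u ∈ S, HasDerivWithinAt f 0 S u) {u v : 𝕜} (hu : u ∈ S) (hv : v ∈ S) : f u = f v := by
  have := hS.norm_image_sub_le_of_norm_hasDerivWithin_le (C := 0) hf (by simp) hv hu
  simpa [sub_eq_zero] using this

theorem exists_eq_pi_div_two_sub_arctan_of_riccati {γ θ θ' : ℝ → ℝ} {s : ℝ} {I : Set ℝ}
    (hs : s ≠ 0) (hI : Convex ℝ I) (hθ : ∀ u ∈ I, HasDerivWithinAt θ (θ' u) I u)
    (hγ : ∀ u ∈ I, HasDerivWithinAt γ (-θ' u * (γ u ^ 2 + s ^ 2)) I u) :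
    ∃ u₀, ∀ u ∈ I, s * (θ u + u₀) = π / 2 - arctan (γ u / s) := by
  obtain rfl | ⟨x, hx⟩ := I.eq_empty_or_nonempty
  · simp
  refine ⟨(π / 2 - (arctan (γ x / s) + s * θ x)) / s, fun u hu => ?_⟩
  have hconst : arctan (γ u / s) + s * θ u = arctan (γ x / s) + s * θ x :=
    eq_of_hasDerivWithinAt_zero hI
      (fun v hv => hasDerivWithinAt_arctan_div_add_of_riccati hs (hθ v hv) (hγ v hv)) hu hx
  rw [← hconst]
  field_simp
  ring

theorem stmt_5_general {κ : ℝ} (hκ : 0 < κ) {I : Set ℝ} (hI : Convex ℝ I) {γ θ θ' : ℝ → ℝ}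
    (hθ : ∀ u ∈ I, HasDerivWithinAt θ (θ' u) I u)
    (hγ : ∀ u ∈ I, HasDerivWithinAt γ (-θ' u * (γ u ^ 2 + κ)) I u) :
    ∃ u₀ : ℝ, ∀ u ∈ I, sin (√κ * (θ u + u₀)) ≠ 0 ∧
      γ u * sin (√κ * (θ u + u₀)) = √κ * cos (√κ * (θ u + u₀)) := by
  have hs : √κ ≠ 0 := (sqrt_pos.mpr hκ).ne'
  obtain ⟨u₀, hangle⟩ := exists_eq_pi_div_two_sub_arctan_of_riccati hs hI hθ
    (by simpa only [sq_sqrt hκ.le] using hγ)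
  refine ⟨u₀, fun u hu => ?_⟩
  rw [hangle u hu, sin_pi_div_two_sub, cos_pi_div_two_sub]
  exact ⟨(cos_arctan_pos _).ne', mul_cos_arctan_div hs (γ u)⟩

open Real in
/-- Uniqueness: every solution of the Riccati equation `γ' + c(γ² + κ) = 0`
with `κ > 0` on an open interval is `γ(u) = √κ·cot(√κ(cu+u₀))` for some `u₀`. -/
theorem stmt_5 (κ c : ℝ) (hκ : 0 < κ) (hc : c ≠ 0)
    (I : Set ℝ) (hI : IsOpen I) (hconv : Convex ℝ I)
    (γ : ℝ → ℝ) (hγ : ∀ u ∈ I, HasDerivAt γ (-c * ((γ u) ^ 2 + κ)) u) :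
    ∃ u₀ : ℝ, ∀ u ∈ I, sin (sqrt κ * (c * u + u₀)) ≠ 0 ∧
      γ u * sin (sqrt κ * (c * u + u₀)) = sqrt κ * cos (sqrt κ * (c * u + u₀)) :=
  stmt_5_general hκ hconv (fun _ _ => (hasDerivAt_const_mul c).hasDerivWithinAt)
    (fun u hu => (hγ u hu).hasDerivWithinAt)
end

section
/- Let A be a commutative ℝ-algebra, let X and Y be ℝ-linear derivations of A (ℝ-linear maps satisfying the Leibniz rule D(ab) = a·D(b) + b·D(a)) with X∘Y = Y∘X, and let f₁, f₂, f₃ ∈ A satisfy X(f₁) = X(f₂) = X(f₃) = 0. Define the ℝ-linear operators U, P : A → A by U(g) = f₁·g + f₂·X(g) and P(g) = Y(g) + f₃·X(g). Then the double commutator [[P,U],U] is the zero operator, where [S,T] := S∘T - T∘S. -/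
/-!
The bracket with a derivation `D` satisfying `⁅D, X⁆ = c • X` maps the operator `a + b X` to the
operator `D a + (D b + b c) X`. If `a`, `b`, `c` are constants of `X`, so are the new coefficients,
because `X (D a) = D (X a) - c * X a = 0`; and operators `a + b X` with coefficients in `ker X`
commute with each other, being polynomials in `X` over a subring whose elements commute with `X`.
In the situation of `stmt_8`, `D = Y + f₃ X` commutes with `X`.
-/

section

variable {R A : Type*} [CommRing R] [CommRing A] [Algebra R A] {X D : Derivation R A A}

/-- The differential operator `a + b X` of order at most one along the derivation `X`, acting on
`A` by `g ↦ a * g + b * X g`. The zeroth and first order coefficients are arguments in this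
order. -/
def firstOrderOp (X : Derivation R A A) (a b : A) : Module.End R A :=
  LinearMap.mulLeft R a + b • (X : A →ₗ[R] A)

@[simp]
lemma firstOrderOp_apply (a b g : A) : firstOrderOp X a b g = a * g + b * X g := rfl

lemma lie_firstOrderOp_firstOrderOp (a b a' b' : A) :
    ⁅firstOrderOp X a b, firstOrderOp X a' b'⁆ =
      firstOrderOp X (b * X a' - b' * X a) (b * X b' - b' * X b) := by
  ext g
  simp only [Ring.lie_def, LinearMap.sub_apply, Module.End.mul_apply, firstOrderOp_apply, map_add,
    Derivation.leibniz, smul_eq_mul]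
  ring

lemma lie_firstOrderOp_eq_zero {a b a' b' : A} (ha : X a = 0) (hb : X b = 0)
    (ha' : X a' = 0) (hb' : X b' = 0) :
    ⁅firstOrderOp X a b, firstOrderOp X a' b'⁆ = 0 := by
  ext g
  simp [lie_firstOrderOp_firstOrderOp, ha, hb, ha', hb']

lemma apply_comm_of_lie_eq_smul {c : A} (hD : ⁅D, X⁆ = c • X) (g : A) :
    D (X g) = X (D g) + c * X g := by
  rw [← sub_eq_iff_eq_add', ← Derivation.commutator_apply, hD, Derivation.smul_apply, smul_eq_mul]

lemma apply_apply_eq_zero_of_lie_eq_smul {a c : A} (hD : ⁅D, X⁆ = c • X) (ha : X a = 0) :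
    X (D a) = 0 := by
  simpa [ha] using (apply_comm_of_lie_eq_smul hD a).symm

lemma lie_derivation_firstOrderOp {c : A} (hD : ⁅D, X⁆ = c • X) (a b : A) :
    ⁅(D : Module.End R A), firstOrderOp X a b⁆ = firstOrderOp X (D a) (D b + b * c) := by
  ext g
  simp only [Ring.lie_def, LinearMap.sub_apply, Module.End.mul_apply, firstOrderOp_apply,
    Derivation.coeFn_coe, map_add, Derivation.leibniz, smul_eq_mul,
    apply_comm_of_lie_eq_smul hD]
  ring

lemma lie_add_smul_self (X Y : Derivation R A A) (f : A) :
    ⁅Y + f • X, X⁆ = ⁅Y, X⁆ - X f • X := by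
  ext g
  simp only [Derivation.commutator_apply, Derivation.add_apply, Derivation.smul_apply,
    Derivation.sub_apply, map_add, Derivation.leibniz, smul_eq_mul]
  ring

theorem stmt_8_general {a b c : A} (hD : ⁅D, X⁆ = c • X)
    (ha : X a = 0) (hb : X b = 0) (hc : X c = 0) :
    ⁅⁅(D : Module.End R A), firstOrderOp X a b⁆, firstOrderOp X a b⁆ = 0 := by
  have hDa : X (D a) = 0 := apply_apply_eq_zero_of_lie_eq_smul hD ha
  have hDb : X (D b + b * c) = 0 := by
    simp [apply_apply_eq_zero_of_lie_eq_smul hD hb, hb, hc]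
  rw [lie_derivation_firstOrderOp hD]
  exact lie_firstOrderOp_eq_zero hDa hDb ha hb

end

/-- Second commutator computation: `[[P,U],U] = 0`. -/
theorem stmt_8 {A : Type*} [CommRing A] [Algebra ℝ A]
    (X Y : A →ₗ[ℝ] A)
    (hX : ∀ a b : A, X (a * b) = a * X b + b * X a)
    (hY : ∀ a b : A, Y (a * b) = a * Y b + b * Y a)
    (hXY : ∀ a : A, X (Y a) = Y (X a))
    (f₁ f₂ f₃ : A) (h1 : X f₁ = 0) (h2 : X f₂ = 0) (h3 : X f₃ = 0)
    (U P : A → A)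
    (hU : ∀ g, U g = f₁ * g + f₂ * X g)
    (hP : ∀ g, P g = Y g + f₃ * X g) :
    ∀ g, (P (U (U g)) - U (P (U g))) - U (P (U g) - U (P g)) = 0 := by
  obtain rfl : U = _ := funext hU
  obtain rfl : P = _ := funext hP
  let X' : Derivation ℝ A A := Derivation.mk' X hX
  let Y' : Derivation ℝ A A := Derivation.mk' Y hY
  have hYX : ⁅Y', X'⁆ = 0 := Derivation.ext fun a ↦ sub_eq_zero.mpr (hXY a).symm
  have hD : ⁅Y' + f₃ • X', X'⁆ = (0 : A) • X' := by
    rw [lie_add_smul_self, hYX, show X' f₃ = 0 from h3, zero_sub, zero_smul, neg_zero]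
  exact LinearMap.congr_fun (stmt_8_general hD h1 h2 (map_zero X'))
end

section
/- Fix a₁, a₂ ∈ ℝ and let F : ℝ → ℝ be differentiable. Define G(θ,φ) = (a₁·sin φ + a₂·cos φ)·sin θ and V(θ,φ) = F((a₁·cos φ - a₂·sin φ)·tan θ) / cos²θ. Then for all (θ,φ) ∈ ℝ² with cos θ ≠ 0 and sin θ ≠ 0, one has ∂V/∂θ·∂G/∂θ + (1/sin²θ)·∂V/∂φ·∂G/∂φ = 2·V·G. -/
/-! Put `p = a₁ sin φ + a₂ cos φ` and `q = a₁ cos φ - a₂ sin φ`, so that `∂p/∂φ = q` and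
`∂q/∂φ = -p`. Then `V = F(u) / cos² θ` with `u = q tan θ`, and `G = p sin θ`. The gradient of `u`
is orthogonal to that of `G`, while `1 / cos² θ` already satisfies the conformal condition; by the
Leibniz and chain rules, multiplying by a function of `u` preserves it. -/

/-- The inner product `∇ⁱf ∇ᵢg` of gradients for the metric `dx² + r(x)² dy²` of a surface of
revolution, in coordinates; `r = sin` is the round two-sphere with `x = θ`, `y = φ`.
Where `r x = 0` the second term is `0` by the convention `1 / 0 = 0`. -/
noncomputable def revolutionGradInner (r : ℝ → ℝ) (f g : ℝ → ℝ → ℝ) (x y : ℝ) : ℝ :=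
  deriv (fun t => f t y) x * deriv (fun t => g t y) x
    + (1 / r x ^ 2) * deriv (fun s => f x s) y * deriv (fun s => g x s) y

section Calculus

variable {r F : ℝ → ℝ} {f g h u w : ℝ → ℝ → ℝ} {x y c : ℝ}

theorem revolutionGradInner_mul_left
    (hfx : DifferentiableAt ℝ (fun t => f t y) x) (hfy : DifferentiableAt ℝ (fun s => f x s) y)
    (hhx : DifferentiableAt ℝ (fun t => h t y) x) (hhy : DifferentiableAt ℝ (fun s => h x s) y) :
    revolutionGradInner r (fun t s => f t s * h t s) g x y =
      f x y * revolutionGradInner r h g x y + h x y * revolutionGradInner r f g x y := by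
  unfold revolutionGradInner
  rw [deriv_fun_mul hfx hhx, deriv_fun_mul hfy hhy]
  ring

theorem revolutionGradInner_comp_left (hF : DifferentiableAt ℝ F (u x y))
    (hux : DifferentiableAt ℝ (fun t => u t y) x) (huy : DifferentiableAt ℝ (fun s => u x s) y) :
    revolutionGradInner r (fun t s => F (u t s)) g x y =
      deriv F (u x y) * revolutionGradInner r u g x y := by
  have hFx : deriv (fun t => F (u t y)) x = deriv F (u x y) * deriv (fun t => u t y) x :=
    deriv_comp x hF hux
  have hFy : deriv (fun s => F (u x s)) y = deriv F (u x y) * deriv (fun s => u x s) y :=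
    deriv_comp y hF huy
  unfold revolutionGradInner
  rw [hFx, hFy]
  ring

theorem revolutionGradInner_comp_mul_of_orthogonal (hF : DifferentiableAt ℝ F (u x y))
    (hux : DifferentiableAt ℝ (fun t => u t y) x) (huy : DifferentiableAt ℝ (fun s => u x s) y)
    (hwx : DifferentiableAt ℝ (fun t => w t y) x) (hwy : DifferentiableAt ℝ (fun s => w x s) y)
    (hug : revolutionGradInner r u g x y = 0)
    (hwg : revolutionGradInner r w g x y = c * w x y * g x y) :
    revolutionGradInner r (fun t s => F (u t s) * w t s) g x y =
      c * (F (u x y) * w x y) * g x y := by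
  have hFux : DifferentiableAt ℝ (fun t => F (u t y)) x := hF.comp x hux
  have hFuy : DifferentiableAt ℝ (fun s => F (u x s)) y := hF.comp y huy
  rw [revolutionGradInner_mul_left hFux hFuy hwx hwy, revolutionGradInner_comp_left hF hux huy,
    hug, hwg]
  ring

end Calculus

section Sphere

open Real

theorem hasDerivAt_mul_sin_add_mul_cos (a b φ : ℝ) :
    HasDerivAt (fun s => a * sin s + b * cos s) (a * cos φ - b * sin φ) φ := by
  simpa [sub_eq_add_neg] using
    ((hasDerivAt_sin φ).const_mul a).fun_add ((hasDerivAt_cos φ).const_mul b)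

theorem hasDerivAt_mul_cos_sub_mul_sin (a b φ : ℝ) :
    HasDerivAt (fun s => a * cos s - b * sin s) (-(a * sin φ + b * cos φ)) φ := by
  simpa [sub_eq_add_neg, add_comm] using hasDerivAt_mul_sin_add_mul_cos (-b) a φ

theorem hasDerivAt_inv_cos_sq {θ : ℝ} (hc : cos θ ≠ 0) :
    HasDerivAt (fun t => (cos t ^ 2)⁻¹) (2 * sin θ / cos θ ^ 3) θ := by
  refine (((hasDerivAt_cos θ).fun_pow 2).fun_inv (pow_ne_zero 2 hc)).congr_deriv ?_
  field_simp
  ring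

variable {p q : ℝ → ℝ} {θ φ : ℝ}

theorem revolutionGradInner_sin_mul_tan_mul_sin_eq_zero (hp : HasDerivAt p (q φ) φ)
    (hq : HasDerivAt q (-p φ) φ) (hc : cos θ ≠ 0) (hs : sin θ ≠ 0) :
    revolutionGradInner sin (fun t s => q s * tan t) (fun t s => p s * sin t) θ φ = 0 := by
  unfold revolutionGradInner
  rw [((hasDerivAt_tan hc).const_mul (q φ)).deriv, ((hasDerivAt_sin θ).const_mul (p φ)).deriv,
    (hq.mul_const (tan θ)).deriv, (hp.mul_const (sin θ)).deriv, tan_eq_sin_div_cos]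
  field_simp
  ring

theorem revolutionGradInner_sin_inv_cos_sq_mul_sin (hc : cos θ ≠ 0) :
    revolutionGradInner sin (fun t _ => (cos t ^ 2)⁻¹) (fun t s => p s * sin t) θ φ =
      2 * (cos θ ^ 2)⁻¹ * (p φ * sin θ) := by
  unfold revolutionGradInner
  rw [(hasDerivAt_inv_cos_sq hc).deriv, ((hasDerivAt_sin θ).const_mul (p φ)).deriv, deriv_const,
    mul_zero, zero_mul, add_zero]
  field_simp

end Sphere

open Real in
/-- The potentials `V = F((a₁cos φ - a₂sin φ)tan θ)/cos²θ` satisfy the conformal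
condition `∇ⁱV ∇ᵢG = 2VG` on the round two-sphere for `G = (a₁sin φ + a₂cos φ)sin θ`. -/
theorem stmt_11 (a₁ a₂ : ℝ) (F : ℝ → ℝ) (hF : Differentiable ℝ F)
    (G V : ℝ → ℝ → ℝ)
    (hG : ∀ θ φ, G θ φ = (a₁ * sin φ + a₂ * cos φ) * sin θ)
    (hV : ∀ θ φ, V θ φ = F ((a₁ * cos φ - a₂ * sin φ) * tan θ) / (cos θ) ^ 2) :
    ∀ θ φ, cos θ ≠ 0 → sin θ ≠ 0 →
      deriv (fun t => V t φ) θ * deriv (fun t => G t φ) θ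
        + (1 / (sin θ) ^ 2) * deriv (fun s => V θ s) φ * deriv (fun s => G θ s) φ
        = 2 * V θ φ * G θ φ := by
  intro θ φ hc hs
  obtain rfl : G = fun θ φ => (a₁ * sin φ + a₂ * cos φ) * sin θ := funext₂ hG
  obtain rfl : V = fun θ φ => F ((a₁ * cos φ - a₂ * sin φ) * tan θ) * (cos θ ^ 2)⁻¹ :=
    funext₂ fun θ φ => (hV θ φ).trans (div_eq_mul_inv _ _)
  have hp := hasDerivAt_mul_sin_add_mul_cos a₁ a₂ φ
  have hq := hasDerivAt_mul_cos_sub_mul_sin a₁ a₂ φ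
  exact revolutionGradInner_comp_mul_of_orthogonal (r := sin)
    (u := fun t s => (a₁ * cos s - a₂ * sin s) * tan t) (w := fun t _ => (cos t ^ 2)⁻¹)
    (hF _)
    ((hasDerivAt_tan hc).const_mul _).differentiableAt
    (hq.mul_const _).differentiableAt
    (hasDerivAt_inv_cos_sq hc).differentiableAt
    (differentiableAt_const _)
    (revolutionGradInner_sin_mul_tan_mul_sin_eq_zero hp hq hc hs)
    (revolutionGradInner_sin_inv_cos_sq_mul_sin hc)
end

section
/- Let n be a positive integer, ℏ, K ∈ ℝ, let f : ℝ → ℝ be smooth with f(u) ≠ 0 for all u, let V : ℝⁿ → ℝ be smooth, and let ψ : ℝ × ℝⁿ → ℝ be smooth. Define the operator L̂ by (L̂ψ)(u,q) = -(ℏ²/2)·Σ_{i=1}^{n} ∂²ψ/∂q_i²(u,q) + V(q)·ψ(u,q), and the operator Ĥ by (Ĥψ)(u,q) = -(ℏ²/2)·(∂²ψ/∂u²(u,q) + n·(f'(u)/f(u))·∂ψ/∂u(u,q)) + (K/f(u)²)·(L̂ψ)(u,q). Then Ĥ(L̂ψ) = L̂(Ĥψ), i.e. the operators Ĥ and L̂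 commute on smooth functions. -/
/-- The flat Laplacian of `ψ` in the variables `q : Fin n → ℝ`. -/
noncomputable def flatLaplacian (n : ℕ) (ψ : (Fin n → ℝ) → ℝ) (q : Fin n → ℝ) : ℝ :=
  ∑ i : Fin n, deriv (deriv (fun t => ψ (Function.update q i t))) (q i)

/-- The quantum Hamiltonian `L̂ = -(ℏ²/2)Δ + V` of the base, acting on
functions `ψ(u,q)` (with `u` a parameter). -/
noncomputable def Lhat (n : ℕ) (ℏ : ℝ) (V : (Fin n → ℝ) → ℝ)
    (ψ : ℝ → (Fin n → ℝ) → ℝ) : ℝ → (Fin n → ℝ) → ℝ :=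
  fun u q => -(ℏ ^ 2 / 2) * flatLaplacian n (ψ u) q + V q * ψ u q

/-- The quantum Hamiltonian `Ĥ = -(ℏ²/2)(∂_u² + n(f'/f)∂_u) + (K/f²)L̂` of the
extended manifold. -/
noncomputable def Hhat (n : ℕ) (ℏ K : ℝ) (f : ℝ → ℝ) (V : (Fin n → ℝ) → ℝ)
    (ψ : ℝ → (Fin n → ℝ) → ℝ) : ℝ → (Fin n → ℝ) → ℝ :=
  fun u q => -(ℏ ^ 2 / 2) *
      (deriv (deriv (fun t => ψ t q)) u
        + (n : ℝ) * (deriv f u / f u) * deriv (fun t => ψ t q) u)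
    + (K / (f u) ^ 2) * Lhat n ℏ V ψ u q

/-! On each fibre `u = const` the operator `L̂` is linear and differentiates in `q` only, so
functions of `u` alone pass through it as constants. Since partial derivatives commute and `V` does
not depend on `u`, it also commutes with `∂_u`. Hence it commutes with every operator
`a(u) ∂_u² + b(u) ∂_u + w(u) L̂`, whatever the coefficients, and `Ĥ` has this form. -/

/-- The derivative `∂_v g` of `g` along the constant vector field `v`, that is, `lineDeriv` with
its arguments reordered so that `dirDeriv v` is an operator on functions and can be iterated. -/
noncomputable def dirDeriv {E F : Type*} [AddCommGroup E] [Module ℝ E]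
    [NormedAddCommGroup F] [NormedSpace ℝ F] (v : E) (g : E → F) : E → F :=
  fun x => lineDeriv ℝ g x v

theorem dirDeriv_const_smul {E F : Type*} [AddCommGroup E] [Module ℝ E]
    [NormedAddCommGroup F] [NormedSpace ℝ F] (c : ℝ) (g : E → F) (v : E) :
    dirDeriv v (c • g) = c • dirDeriv v g :=
  funext fun _ => deriv_fun_const_smul_field c _

section DirectionalDerivative

variable {E F : Type*} [NormedAddCommGroup E] [NormedSpace ℝ E]
  [NormedAddCommGroup F] [NormedSpace ℝ F] {g h : E → F} {k m : WithTop ℕ∞}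

theorem dirDeriv_eq_fderiv (hg : Differentiable ℝ g) (v : E) :
    dirDeriv v g = fun x => fderiv ℝ g x v :=
  funext fun x => (hg x).lineDeriv_eq_fderiv

theorem contDiff_dirDeriv (hg : ContDiff ℝ m g) (hkm : k + 1 ≤ m) (v : E) :
    ContDiff ℝ k (dirDeriv v g) := by
  rw [dirDeriv_eq_fderiv ((hg.of_le (le_add_self.trans hkm)).differentiable one_ne_zero)]
  exact (hg.fderiv_right hkm).clm_apply contDiff_const

theorem differentiable_dirDeriv (hg : ContDiff ℝ 2 g) (v : E) : Differentiable ℝ (dirDeriv v g) :=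
  (contDiff_dirDeriv hg one_add_one_eq_two.le v).differentiable one_ne_zero

theorem dirDeriv_dirDeriv_eq_fderiv_fderiv (hg : ContDiff ℝ 2 g) (v w x : E) :
    dirDeriv v (dirDeriv w g) x = fderiv ℝ (fderiv ℝ g) x v w := by
  have hg' : Differentiable ℝ (fderiv ℝ g) :=
    (hg.fderiv_right one_add_one_eq_two.le).differentiable one_ne_zero
  have hw := (hg' x).hasFDerivAt.clm_apply (hasFDerivAt_const w x)
  rw [dirDeriv_eq_fderiv (hg.differentiable two_ne_zero)]
  exact (hw.hasLineDerivAt v).lineDeriv.trans (by simp)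

theorem dirDeriv_comm (hg : ContDiff ℝ 2 g) (v w : E) :
    dirDeriv v (dirDeriv w g) = dirDeriv w (dirDeriv v g) := by
  funext x
  have hsymm : IsSymmSndFDerivAt ℝ g x :=
    hg.contDiffAt.isSymmSndFDerivAt minSmoothness_of_isRCLikeNormedField.le
  rw [dirDeriv_dirDeriv_eq_fderiv_fderiv hg, dirDeriv_dirDeriv_eq_fderiv_fderiv hg, hsymm]

theorem dirDeriv_add (hg : Differentiable ℝ g) (hh : Differentiable ℝ h) (v : E) :
    dirDeriv v (g + h) = dirDeriv v g + dirDeriv v h :=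
  funext fun x => deriv_fun_add (hg x).lineDifferentiableAt (hh x).lineDifferentiableAt

theorem dirDeriv_sum {ι : Type*} {s : Finset ι} {g : ι → E → F}
    (hg : ∀ i ∈ s, Differentiable ℝ (g i)) (v : E) :
    dirDeriv v (∑ i ∈ s, g i) = ∑ i ∈ s, dirDeriv v (g i) := by
  funext x
  simp only [dirDeriv, lineDeriv, Finset.sum_apply]
  exact deriv_fun_sum fun i hi => (hg i hi x).lineDifferentiableAt

end DirectionalDerivative

/-- The partial derivative `∂_u ψ` of a function `ψ(u,q)` in the radial variable `u`. -/
noncomputable def radialDeriv {E F : Type*} [NormedAddCommGroup F] [NormedSpace ℝ F]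
    (ψ : ℝ → E → F) : ℝ → E → F :=
  fun u q => deriv (fun t => ψ t q) u

section PartialDerivative

variable {E F : Type*} [AddCommGroup E] [Module ℝ E] [NormedAddCommGroup F] [NormedSpace ℝ F]

theorem deriv_comp_update {ι : Type*} [DecidableEq ι] (φ : (ι → ℝ) → F) (q : ι → ℝ) (i : ι) :
    deriv (fun t => φ (Function.update q i t)) =
      fun t => dirDeriv (Pi.single i 1) φ (Function.update q i t) := by
  funext t
  have hline (s : ℝ) :
      Function.update q i t + s • Pi.single i (1 : ℝ) = Function.update q i (t + s) := by
    ext j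
    rcases eq_or_ne j i with rfl | hj <;> simp [*]
  simp only [dirDeriv, lineDeriv, hline]
  rw [deriv_comp_const_add (f := fun s => φ (Function.update q i s)), add_zero]

theorem uncurry_radialDeriv (ψ : ℝ → E → F) :
    Function.uncurry (radialDeriv ψ) = dirDeriv (1, 0) (Function.uncurry ψ) := by
  funext ⟨u, q⟩
  simp [Function.uncurry, radialDeriv, dirDeriv, lineDeriv,
    deriv_comp_const_add (f := fun t => ψ t q)]

theorem uncurry_dirDeriv (ψ : ℝ → E → F) (v : E) :
    Function.uncurry (fun u => dirDeriv v (ψ u)) = dirDeriv (0, v) (Function.uncurry ψ) := by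
  funext ⟨u, q⟩
  simp [Function.uncurry, dirDeriv, lineDeriv]

end PartialDerivative

theorem contDiff_radialDeriv {E F : Type*} [NormedAddCommGroup E] [NormedSpace ℝ E]
    [NormedAddCommGroup F] [NormedSpace ℝ F] {ψ : ℝ → E → F} {k m : WithTop ℕ∞}
    (hψ : ContDiff ℝ m (Function.uncurry ψ)) (hkm : k + 1 ≤ m) :
    ContDiff ℝ k (Function.uncurry (radialDeriv ψ)) := by
  rw [uncurry_radialDeriv]
  exact contDiff_dirDeriv hψ hkm _

section Laplacian

variable {n : ℕ} {φ χ : (Fin n → ℝ) → ℝ} {ψ : ℝ → (Fin n → ℝ) → ℝ} {k m : WithTop ℕ∞}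

theorem flatLaplacian_eq_sum_dirDeriv (φ : (Fin n → ℝ) → ℝ) :
    flatLaplacian n φ = ∑ i, dirDeriv (Pi.single i 1) (dirDeriv (Pi.single i 1) φ) := by
  funext q
  simp only [flatLaplacian, deriv_comp_update, Function.update_eq_self, Finset.sum_apply]

theorem flatLaplacian_add (hφ : ContDiff ℝ 2 φ) (hχ : ContDiff ℝ 2 χ) :
    flatLaplacian n (φ + χ) = flatLaplacian n φ + flatLaplacian n χ := by
  simp only [flatLaplacian_eq_sum_dirDeriv, ← Finset.sum_add_distrib]
  refine Finset.sum_congr rfl fun i _ => ?_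
  rw [dirDeriv_add (hφ.differentiable two_ne_zero) (hχ.differentiable two_ne_zero),
    dirDeriv_add (differentiable_dirDeriv hφ _) (differentiable_dirDeriv hχ _)]

theorem flatLaplacian_const_smul (c : ℝ) (φ : (Fin n → ℝ) → ℝ) :
    flatLaplacian n (c • φ) = c • flatLaplacian n φ := by
  simp only [flatLaplacian_eq_sum_dirDeriv, dirDeriv_const_smul, Finset.smul_sum]

theorem uncurry_flatLaplacian (ψ : ℝ → (Fin n → ℝ) → ℝ) :
    Function.uncurry (fun u => flatLaplacian n (ψ u)) =
      ∑ i, dirDeriv (0, Pi.single i 1) (dirDeriv (0, Pi.single i 1) (Function.uncurry ψ)) := by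
  simp only [← uncurry_dirDeriv, flatLaplacian_eq_sum_dirDeriv]
  funext ⟨u, q⟩
  simp only [Function.uncurry_apply_pair, Finset.sum_apply]

theorem contDiff_flatLaplacian (hψ : ContDiff ℝ m (Function.uncurry ψ)) (hkm : k + 2 ≤ m) :
    ContDiff ℝ k (Function.uncurry fun u => flatLaplacian n (ψ u)) := by
  rw [uncurry_flatLaplacian, Finset.sum_fn]
  have hkm' : k + 1 + 1 ≤ m := by rwa [add_assoc, one_add_one_eq_two]
  exact ContDiff.sum fun i _ => contDiff_dirDeriv (contDiff_dirDeriv hψ hkm' _) le_rfl _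

theorem radialDeriv_flatLaplacian (hψ : ContDiff ℝ 3 (Function.uncurry ψ)) :
    radialDeriv (fun u => flatLaplacian n (ψ u)) = fun u => flatLaplacian n (radialDeriv ψ u) := by
  have hψ₂ (v : ℝ × (Fin n → ℝ)) : ContDiff ℝ 2 (dirDeriv v (Function.uncurry ψ)) :=
    contDiff_dirDeriv hψ two_add_one_eq_three.le v
  apply Function.uncurry_injective
  rw [uncurry_radialDeriv, uncurry_flatLaplacian, uncurry_flatLaplacian, uncurry_radialDeriv,
    dirDeriv_sum fun i _ => differentiable_dirDeriv (hψ₂ _) _]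
  refine Finset.sum_congr rfl fun i _ => ?_
  rw [dirDeriv_comm (hψ₂ _), dirDeriv_comm (hψ.of_le (by norm_num))]

end Laplacian

section Schrodinger

variable {n : ℕ} {ℏ : ℝ} {V : (Fin n → ℝ) → ℝ} {ψ χ : ℝ → (Fin n → ℝ) → ℝ} {k m : WithTop ℕ∞}

theorem Lhat_add (hψ : ∀ u, ContDiff ℝ 2 (ψ u)) (hχ : ∀ u, ContDiff ℝ 2 (χ u)) :
    Lhat n ℏ V (ψ + χ) = Lhat n ℏ V ψ + Lhat n ℏ V χ := by
  funext u q
  simp only [Lhat, Pi.add_apply, flatLaplacian_add (hψ u) (hχ u)]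
  ring

theorem Lhat_radial_smul (a : ℝ → ℝ) (ψ : ℝ → (Fin n → ℝ) → ℝ) :
    Lhat n ℏ V (fun u => a u • ψ u) = fun u => a u • Lhat n ℏ V ψ u := by
  funext u q
  simp only [Lhat, flatLaplacian_const_smul, Pi.smul_apply, smul_eq_mul]
  ring

theorem contDiff_Lhat (hV : ContDiff ℝ k V) (hψ : ContDiff ℝ m (Function.uncurry ψ))
    (hkm : k + 2 ≤ m) : ContDiff ℝ k (Function.uncurry (Lhat n ℏ V ψ)) :=
  (contDiff_const.mul (contDiff_flatLaplacian hψ hkm)).add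
    ((hV.comp contDiff_snd).mul (hψ.of_le (le_self_add.trans hkm)))

theorem radialDeriv_Lhat (hψ : ContDiff ℝ 3 (Function.uncurry ψ)) :
    radialDeriv (Lhat n ℏ V ψ) = Lhat n ℏ V (radialDeriv ψ) := by
  funext u q
  have diff_radial {χ : ℝ → (Fin n → ℝ) → ℝ} (hχ : ContDiff ℝ 1 (Function.uncurry χ)) :
      DifferentiableAt ℝ (fun t => χ t q) u :=
    (hχ.comp (contDiff_prodMk_left q)).differentiable one_ne_zero u
  have hΔ := diff_radial (contDiff_flatLaplacian hψ (by norm_num))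
  have hψu := diff_radial (hψ.of_le (by norm_num))
  calc radialDeriv (Lhat n ℏ V ψ) u q
      = -(ℏ ^ 2 / 2) * radialDeriv (fun t => flatLaplacian n (ψ t)) u q
          + V q * radialDeriv ψ u q := by
        simp only [radialDeriv, Lhat]
        rw [deriv_fun_add (hΔ.const_mul _) (hψu.const_mul _), deriv_const_mul _ hΔ,
          deriv_const_mul _ hψu]
    _ = Lhat n ℏ V (radialDeriv ψ) u q := by rw [radialDeriv_flatLaplacian hψ, Lhat]

/-- The operator `a ∂_u² + b ∂_u + w L̂` with arbitrary coefficients `a`, `b`, `w` depending on the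
radial variable only; `Ĥ` is the case dictated by the warped metric `du² + f(u)² g`. -/
noncomputable def radialExtension (n : ℕ) (ℏ : ℝ) (a b w : ℝ → ℝ) (V : (Fin n → ℝ) → ℝ)
    (ψ : ℝ → (Fin n → ℝ) → ℝ) : ℝ → (Fin n → ℝ) → ℝ :=
  (fun u => a u • radialDeriv (radialDeriv ψ) u) + (fun u => b u • radialDeriv ψ u)
    + fun u => w u • Lhat n ℏ V ψ u

theorem Hhat_eq_radialExtension (n : ℕ) (ℏ K : ℝ) (f : ℝ → ℝ) (V : (Fin n → ℝ) → ℝ) :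
    Hhat n ℏ K f V = radialExtension n ℏ (fun _ => -(ℏ ^ 2 / 2))
      (fun u => -(ℏ ^ 2 / 2) * (n * (deriv f u / f u))) (fun u => K / f u ^ 2) V := by
  funext ψ u q
  simp only [Hhat, radialExtension, radialDeriv, Pi.add_apply, Pi.smul_apply, smul_eq_mul]
  ring

end Schrodinger

theorem stmt_14_general {n : ℕ} (ℏ : ℝ) (a b w : ℝ → ℝ) {V : (Fin n → ℝ) → ℝ}
    (hV : ContDiff ℝ 2 V) {ψ : ℝ → (Fin n → ℝ) → ℝ} (hψ : ContDiff ℝ 4 (Function.uncurry ψ)) :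
    radialExtension n ℏ a b w V (Lhat n ℏ V ψ) = Lhat n ℏ V (radialExtension n ℏ a b w V ψ) := by
  have hψ₃ : ContDiff ℝ 3 (Function.uncurry (radialDeriv ψ)) :=
    contDiff_radialDeriv hψ three_add_one_eq_four.le
  have hψ₂ : ContDiff ℝ 2 (Function.uncurry (radialDeriv (radialDeriv ψ))) :=
    contDiff_radialDeriv hψ₃ two_add_one_eq_three.le
  have hL : ContDiff ℝ 2 (Function.uncurry (Lhat n ℏ V ψ)) :=
    contDiff_Lhat hV hψ (by norm_num)
  have contDiff_smul (c : ℝ → ℝ) {χ : ℝ → (Fin n → ℝ) → ℝ}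
      (hχ : ContDiff ℝ 2 (Function.uncurry χ)) (u : ℝ) : ContDiff ℝ 2 (c u • χ u) :=
    (hχ.comp (contDiff_prodMk_right u)).const_smul (c u)
  have h₂ := contDiff_smul a hψ₂
  have h₁ := contDiff_smul b (hψ₃.of_le (by norm_num))
  have h₀ := contDiff_smul w hL
  have h₂₁ (u : ℝ) : ContDiff ℝ 2
      (((fun u => a u • radialDeriv (radialDeriv ψ) u) + fun u => b u • radialDeriv ψ u) u) :=
    (h₂ u).add (h₁ u)
  calc radialExtension n ℏ a b w V (Lhat n ℏ V ψ)
      = (fun u => a u • Lhat n ℏ V (radialDeriv (radialDeriv ψ)) u)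
          + (fun u => b u • Lhat n ℏ V (radialDeriv ψ) u)
          + fun u => w u • Lhat n ℏ V (Lhat n ℏ V ψ) u := by
        rw [radialExtension, radialDeriv_Lhat (hψ.of_le (by norm_num)), radialDeriv_Lhat hψ₃]
    _ = Lhat n ℏ V (radialExtension n ℏ a b w V ψ) := by
        rw [radialExtension, Lhat_add h₂₁ h₀, Lhat_add h₂ h₁, Lhat_radial_smul,
          Lhat_radial_smul, Lhat_radial_smul]

/-- Proposition of Section 5: `L̂` is a symmetry operator of `Ĥ`, i.e.
`[Ĥ, L̂] = 0` on smooth functions. -/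
theorem stmt_14 (n : ℕ) (hn : 1 ≤ n) (ℏ K : ℝ) (f : ℝ → ℝ)
    (hf : ContDiff ℝ (⊤ : ℕ∞) f) (hf0 : ∀ u, f u ≠ 0)
    (V : (Fin n → ℝ) → ℝ) (hV : ContDiff ℝ (⊤ : ℕ∞) V)
    (ψ : ℝ → (Fin n → ℝ) → ℝ)
    (hψ : ContDiff ℝ (⊤ : ℕ∞) (fun p : ℝ × (Fin n → ℝ) => ψ p.1 p.2)) :
    Hhat n ℏ K f V (Lhat n ℏ V ψ) = Lhat n ℏ V (Hhat n ℏ K f V ψ) := by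
  rw [Hhat_eq_radialExtension]
  exact stmt_14_general ℏ _ _ _ (contDiff_infty.1 hV 2) (contDiff_infty.1 hψ 4)
end
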